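/- Let r = (r₁,r₂) ∈ ℝ², z ∈ ℂ and τ ∈ ℍ, and set ϖ_r(z,τ) := ∏_{k=0}^∞ (1 − e(z + (k+r₂)τ − r₁)). Then ϖ_r(z,τ) · ϖ_{−r}(−z,τ) · η(τ) = i · e(−(r₂²/2 + 1/12)τ − r₂(z − r₁ + 1/2)) · (e((z+r₂τ−r₁)/2) − e(−(z+r₂τ−r₁)/2)) · ϑ_r(z,τ). (Jacobi triple product with characteristics.) -/

import Mathlib

/-!
With `w = z + r₂τ - r₁`, `u = e(w)` and `q = e(τ)`, both sides of the identity are elementary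
multiples of the two sides of the classical Jacobi triple product
`∏_{k ≥ 0} (1 - u q^k)(1 - u⁻¹ q^(k+1))(1 - q^(k+1)) = ∑ₙ (-1)^n q^(n(n-1)/2) u^n`.

The classical identity is the limit of a finite one (`hasSum_finite_triple`): the product of the
first `N` factors `(1 - u q^k)(1 - u⁻¹ q^(k+1))`, divided by `(q;q)_{2N}`, is
`∑ₙ (-1)^n q^(n(n-1)/2) u^n / ((q;q)_{N+n} (q;q)_{N-n})`. With the convention `1/(q;q)_m = 0` for
`m < 0`, the recurrence `1/(q;q)_{m-1} = (1 - q^m)/(q;q)_m` holds for all integers `m`, so the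
induction on `N` is a termwise polynomial identity between a series over `ℤ` and its shifts, with
no boundary terms. Since `(q;q)_m` converges to a nonzero limit, the numbers `1/(q;q)_m` are
bounded, and dominated convergence (`triple_product`) gives the infinite identity; the dominating
series converges because its terms are those of Mathlib's two-variable theta function.
-/

open Complex

/-- `e(z) = exp(2πiz)`. -/
noncomputable def ee (z : ℂ) : ℂ := Complex.exp (2 * Real.pi * Complex.I * z)

/-- The q-Pochhammer product with characteristics:
`ϖ_r(z,τ) = ∏_{k≥0} (1 − e(z + (k+r₂)τ − r₁))`. -/
noncomputable def varpiChar (r : ℝ × ℝ) (z τ : ℂ) : ℂ :=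
  ∏' k : ℕ, (1 - ee (z + ((k : ℂ) + (r.2 : ℂ)) * τ - (r.1 : ℂ)))

/-- The Dedekind eta function `η(τ) = e(τ/24) ∏_{k≥1} (1 − e(kτ))`. -/
noncomputable def dedekindEta (τ : ℂ) : ℂ :=
  ee (τ / 24) * ∏' k : ℕ, (1 - ee (((k : ℂ) + 1) * τ))

/-- The Jacobi theta function with characteristics `r = (r₁, r₂) ∈ ℝ²`. -/
noncomputable def thetaChar (r : ℝ × ℝ) (z τ : ℂ) : ℂ :=
  ∑' n : ℤ, ee ((1/2) * ((n : ℂ) + (r.2 : ℂ) + 1/2)^2 * τ +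
    ((n : ℂ) + (r.2 : ℂ) + 1/2) * (z - (r.1 : ℂ) + 1/2))

/-! ### Finite products and the finite triple product -/

/-- The finite `q`-Pochhammer symbol `(q; q)_m = ∏_{k=1}^m (1 - q^k)`. -/
noncomputable def qPoch (q : ℂ) (m : ℕ) : ℂ := ∏ k ∈ Finset.range m, (1 - q ^ (k + 1))

/-- The reciprocal `1 / (q; q)_m` for an integer `m`, with the usual convention that it vanishes
for `m < 0`. -/
noncomputable def qPochInv (q : ℂ) (m : ℤ) : ℂ := if m < 0 then 0 else (qPoch q m.toNat)⁻¹

/-- The truncated product `∏_{k < N} (1 - u q^k) (1 - u⁻¹ q^(k+1))`. -/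
noncomputable def partialTriple (q u : ℂ) (N : ℕ) : ℂ :=
  ∏ k ∈ Finset.range N, ((1 - u * q ^ k) * (1 - u⁻¹ * q ^ (k + 1)))

lemma one_sub_pow_succ_ne_zero {q : ℂ} (hq : ‖q‖ < 1) (k : ℕ) : 1 - q ^ (k + 1) ≠ 0 := by
  intro h
  have h1 : ‖q ^ (k + 1)‖ < 1 := by
    rw [norm_pow]
    exact pow_lt_one₀ (norm_nonneg _) hq (Nat.succ_ne_zero k)
  rw [← sub_eq_zero.mp h, norm_one] at h1
  exact lt_irrefl _ h1

lemma qPoch_ne_zero {q : ℂ} (hq : ‖q‖ < 1) (m : ℕ) : qPoch q m ≠ 0 :=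
  Finset.prod_ne_zero_iff.mpr fun k _ => one_sub_pow_succ_ne_zero hq k

lemma qPochInv_natCast (q : ℂ) (m : ℕ) : qPochInv q (m : ℤ) = (qPoch q m)⁻¹ := by
  simp [qPochInv]

/-- The recurrence `1/(q;q)_{m-1} = (1 - q^m) / (q;q)_m` holds for every integer `m`; at `m = 0`
both sides vanish because of the factor `1 - q^0`. -/
lemma qPochInv_sub_one {q : ℂ} (hq : ‖q‖ < 1) (m : ℤ) :
    qPochInv q (m - 1) = (1 - q ^ m) * qPochInv q m := by
  rcases lt_trichotomy m 0 with h | rfl | h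
  · simp [qPochInv, h, show m < 1 by lia]
  · simp [qPochInv]
  · obtain ⟨k, rfl⟩ : ∃ k : ℕ, m = ((k + 1 : ℕ) : ℤ) := ⟨(m - 1).toNat, by lia⟩
    have h1 : (((k + 1 : ℕ) : ℤ) - 1) = (k : ℤ) := by push_cast; ring
    rw [h1, qPochInv_natCast, qPochInv_natCast, zpow_natCast, qPoch, qPoch,
      Finset.prod_range_succ]
    have h2 := one_sub_pow_succ_ne_zero hq k
    field_simp

/-- The finite form of the triple product: with `a n = (-1)^n q^(n(n-1)/2) u^n`, given here by
its recurrence, `∏_{k<N} (1 - u q^k)(1 - u⁻¹ q^(k+1)) / (q;q)_{2N}` equals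
`∑ₙ a n / ((q;q)_{N+n} (q;q)_{N-n})`, a sum with finitely many nonzero terms. -/
lemma hasSum_finite_triple {q u : ℂ} (hq : ‖q‖ < 1) (hq0 : q ≠ 0) (hu : u ≠ 0) (a : ℤ → ℂ)
    (ha0 : a 0 = 1) (ha : ∀ n, a (n + 1) = -(q ^ n * u) * a n) (N : ℕ) :
    HasSum (fun n : ℤ => a n * (qPochInv q (N + n) * qPochInv q (N - n)))
      (partialTriple q u N * (qPoch q (2 * N))⁻¹) := by
  induction N with
  | zero =>
    have h := hasSum_single (f := fun n : ℤ =>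
      a n * (qPochInv q ((0 : ℕ) + n) * qPochInv q ((0 : ℕ) - n))) 0 (by
        intro n hn
        rcases lt_or_gt_of_ne hn with h | h
        · simp [qPochInv, h]
        · simp [qPochInv, h])
    simpa [ha0, qPochInv, qPoch, partialTriple] using h
  | succ N ih =>
    set S := partialTriple q u N * (qPoch q (2 * N))⁻¹ with hS
    have d1 := one_sub_pow_succ_ne_zero hq (2 * N)
    have d2 := one_sub_pow_succ_ne_zero hq (2 * N + 1)
    set D : ℂ := (1 - q ^ (2 * N + 1)) * (1 - q ^ (2 * N + 1 + 1)) with hD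
    have hD0 : D ≠ 0 := mul_ne_zero d1 d2
    have hsub := ((Equiv.subRight (1 : ℤ)).hasSum_iff).mpr ih
    have hadd := ((Equiv.addRight (1 : ℤ)).hasSum_iff).mpr ih
    -- Multiplying by `(1 - u q^N)(1 - u⁻¹ q^(N+1))` combines the series with its two shifts.
    have key := (((ih.mul_left (1 + q ^ (2 * N + 1))).sub (hsub.mul_left (u * q ^ N))).sub
      (hadd.mul_left (u⁻¹ * q ^ (N + 1)))).mul_left D⁻¹
    refine (congrArg₂ (fun f s => HasSum f s) ?_ ?_).mpr key
    · funext n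
      set A := q ^ ((N : ℤ) + n) with hAdef
      set B := q ^ ((N : ℤ) - n) with hBdef
      have hAB : q ^ (2 * N) = A * B := by
        rw [hAdef, hBdef, ← zpow_add₀ hq0, ← zpow_natCast]
        congr 1; push_cast; ring
      have hA1 : q ^ ((N : ℤ) + n + 1) = A * q := zpow_add_one₀ hq0 _
      have hB1 : q ^ ((N : ℤ) - n + 1) = B * q := zpow_add_one₀ hq0 _
      set G := qPochInv q ((N : ℤ) + n + 1) with hG
      set H := qPochInv q ((N : ℤ) - n + 1) with hH
      have g1 : qPochInv q ((N : ℤ) + n) = (1 - A * q) * G := by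
        have := qPochInv_sub_one hq ((N : ℤ) + n + 1)
        rwa [add_sub_cancel_right, hA1] at this
      have g2 : qPochInv q ((N : ℤ) + n - 1) = (1 - A) * ((1 - A * q) * G) := by
        rw [qPochInv_sub_one hq, g1]
      have h1 : qPochInv q ((N : ℤ) - n) = (1 - B * q) * H := by
        have := qPochInv_sub_one hq ((N : ℤ) - n + 1)
        rwa [add_sub_cancel_right, hB1] at this
      have h2 : qPochInv q ((N : ℤ) - n - 1) = (1 - B) * ((1 - B * q) * H) := by
        rw [qPochInv_sub_one hq, h1]
      have e1 : u * q ^ N * a (n - 1) = -(B * q) * a n := by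
        have := ha (n - 1)
        rw [sub_add_cancel] at this
        rw [this, ← hB1]
        have : q ^ ((N : ℤ) - n + 1) * q ^ (n - 1) = q ^ N := by
          rw [← zpow_add₀ hq0, ← zpow_natCast]
          congr 1; ring
        linear_combination (-(u * a (n - 1))) * this
      have e2 : u⁻¹ * q ^ (N + 1) * a (n + 1) = -(A * q) * a n := by
        rw [ha, ← hA1]
        have : q ^ ((N : ℤ) + n + 1) = q ^ (N + 1) * q ^ n := by
          rw [← zpow_natCast, ← zpow_add₀ hq0]
          congr 1; push_cast; ring
        rw [this]
        field_simp
      have i1 : (((N + 1 : ℕ) : ℤ) + n) = (N : ℤ) + n + 1 := by push_cast; ring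
      have i2 : (((N + 1 : ℕ) : ℤ) - n) = (N : ℤ) - n + 1 := by push_cast; ring
      have i3 : ((N : ℤ) + (n - 1)) = (N : ℤ) + n - 1 := by ring
      have i4 : ((N : ℤ) - (n - 1)) = (N : ℤ) - n + 1 := by ring
      have i5 : ((N : ℤ) + (n + 1)) = (N : ℤ) + n + 1 := by ring
      have i6 : ((N : ℤ) - (n + 1)) = (N : ℤ) - n - 1 := by ring
      simp only [Function.comp_apply, Equiv.subRight_apply, Equiv.coe_addRight]
      rw [i1, i2, i3, i4, i5, i6, g2, h2, g1, h1, ← hG, ← hH, eq_inv_mul_iff_mul_eq₀ hD0, hD,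
        pow_succ q (2 * N + 1), pow_succ q (2 * N), hAB]
      linear_combination ((1 - A) * ((1 - A * q) * G) * H) * e1 +
        (G * ((1 - B) * ((1 - B * q) * H))) * e2
    · have hp : qPoch q (2 * (N + 1)) = qPoch q (2 * N) * D := by
        rw [show 2 * (N + 1) = 2 * N + 1 + 1 by ring, qPoch, qPoch, Finset.prod_range_succ,
          Finset.prod_range_succ, hD, mul_assoc]
      have hP : partialTriple q u (N + 1) = partialTriple q u N *
          ((1 - u * q ^ N) * (1 - u⁻¹ * q ^ (N + 1))) := by
        rw [partialTriple, partialTriple, Finset.prod_range_succ]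
      have huu : u * u⁻¹ = 1 := mul_inv_cancel₀ hu
      rw [hp, hP, hS, mul_inv]
      linear_combination (D⁻¹ * partialTriple q u N * (qPoch q (2 * N))⁻¹ *
        q ^ (2 * N + 1)) * huu

/-! ### Passage to the limit -/

lemma tendsto_qPoch {q : ℂ} (hq : ‖q‖ < 1) :
    Filter.Tendsto (qPoch q) Filter.atTop (nhds (∏' k : ℕ, (1 - q ^ (k + 1)))) :=
  (ModularForm.multipliable_one_sub_pow hq).hasProd.tendsto_prod_nat

lemma tprod_one_sub_pow_ne_zero {q : ℂ} (hq : ‖q‖ < 1) : ∏' k : ℕ, (1 - q ^ (k + 1)) ≠ 0 := by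
  simp_rw [sub_eq_add_neg]
  refine tprod_one_add_ne_zero_of_summable (f := fun k : ℕ => -q ^ (k + 1)) ?_ ?_
  · intro k
    simpa [sub_eq_add_neg] using one_sub_pow_succ_ne_zero hq k
  · simpa using (summable_nat_add_iff 1).mpr (summable_geometric_of_lt_one (norm_nonneg _) hq)

lemma multipliable_one_sub_mul_pow {q : ℂ} (hq : ‖q‖ < 1) (c : ℂ) :
    Multipliable fun k : ℕ => 1 - c * q ^ k := by
  simp_rw [sub_eq_add_neg]
  apply multipliable_one_add_of_summable (f := fun k : ℕ => -(c * q ^ k))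
  simpa using (summable_geometric_of_lt_one (norm_nonneg _) hq).mul_left ‖c‖

lemma exists_qPochInv_bound {q : ℂ} (hq : ‖q‖ < 1) : ∃ C, ∀ m, ‖qPochInv q m‖ ≤ C := by
  have ht := (tendsto_qPoch hq).inv₀ (tprod_one_sub_pow_ne_zero hq)
  obtain ⟨C, hC⟩ := (Metric.isBounded_range_of_tendsto _ ht).exists_norm_le
  refine ⟨C, fun m => ?_⟩
  have hC0 : 0 ≤ C := (norm_nonneg _).trans (hC _ ⟨0, rfl⟩)
  by_cases h : m < 0
  · simpa [qPochInv, h] using hC0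
  · simpa [qPochInv, h] using hC _ ⟨m.toNat, rfl⟩

lemma tendsto_qPochInv {q : ℂ} (hq : ‖q‖ < 1) :
    Filter.Tendsto (qPochInv q) Filter.atTop (nhds (∏' k : ℕ, (1 - q ^ (k + 1)))⁻¹) := by
  have ht := (tendsto_qPoch hq).inv₀ (tprod_one_sub_pow_ne_zero hq)
  have hN : Filter.Tendsto Int.toNat Filter.atTop Filter.atTop :=
    Filter.tendsto_atTop.mpr fun b => by
      filter_upwards [Filter.eventually_ge_atTop (b : ℤ)] with m hm
      lia
  refine (ht.comp hN).congr' ?_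
  filter_upwards [Filter.eventually_ge_atTop (0 : ℤ)] with m hm
  simp [qPochInv, not_lt.mpr hm]

/-- The Jacobi triple product `(q;q)_∞ (u;q)_∞ (u⁻¹q;q)_∞ = ∑ₙ a n`, where
`a n = (-1)^n q^(n(n-1)/2) u^n` is given by its recurrence. It is the limit `N → ∞` of the finite
form, by dominated convergence. -/
lemma triple_product {q u : ℂ} (hq : ‖q‖ < 1) (hq0 : q ≠ 0) (hu : u ≠ 0) (a : ℤ → ℂ)
    (ha0 : a 0 = 1) (ha : ∀ n, a (n + 1) = -(q ^ n * u) * a n) (hs : Summable a) :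
    (∏' k : ℕ, (1 - u * q ^ k)) * (∏' k : ℕ, (1 - u⁻¹ * q ^ (k + 1))) *
      (∏' k : ℕ, (1 - q ^ (k + 1))) = ∑' n, a n := by
  set E := ∏' k : ℕ, (1 - q ^ (k + 1)) with hE
  have hE0 : E ≠ 0 := tprod_one_sub_pow_ne_zero hq
  obtain ⟨C, hC⟩ := exists_qPochInv_bound hq
  have hC0 : 0 ≤ C := (norm_nonneg _).trans (hC 0)
  have hlim : Filter.Tendsto
      (fun N : ℕ => ∑' n : ℤ, a n * (qPochInv q (N + n) * qPochInv q (N - n)))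
      Filter.atTop (nhds (∑' n, a n * (E⁻¹ * E⁻¹))) := by
    refine tendsto_tsum_of_dominated_convergence (hs.norm.mul_right (C * C)) ?_ ?_
    · intro n
      have t1 : Filter.Tendsto (fun N : ℕ => (N : ℤ) + n) Filter.atTop Filter.atTop :=
        Filter.tendsto_atTop_add_const_right _ _ tendsto_natCast_atTop_atTop
      have t2 : Filter.Tendsto (fun N : ℕ => (N : ℤ) - n) Filter.atTop Filter.atTop :=
        Filter.tendsto_atTop_add_const_right _ (-n) tendsto_natCast_atTop_atTop
      exact (((tendsto_qPochInv hq).comp t1).mul ((tendsto_qPochInv hq).comp t2)).const_mul _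
    · refine Filter.Eventually.of_forall fun N n => ?_
      rw [norm_mul, norm_mul]
      gcongr <;> exact hC _
  have hm2 : Multipliable fun k : ℕ => 1 - u⁻¹ * q ^ (k + 1) := by
    have := multipliable_one_sub_mul_pow hq (u⁻¹ * q)
    simpa only [pow_succ', mul_assoc] using this
  have hP : Filter.Tendsto (partialTriple q u) Filter.atTop
      (nhds ((∏' k : ℕ, (1 - u * q ^ k)) * (∏' k : ℕ, (1 - u⁻¹ * q ^ (k + 1))))) :=
    ((multipliable_one_sub_mul_pow hq u).hasProd.mul hm2.hasProd).tendsto_prod_nat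
  have h2N : Filter.Tendsto (fun N : ℕ => 2 * N) Filter.atTop Filter.atTop :=
    Filter.tendsto_id.const_mul_atTop' two_pos
  have hlim2 := hP.mul (((tendsto_qPoch hq).comp h2N).inv₀ hE0)
  have hfun : (fun N : ℕ => ∑' n : ℤ, a n * (qPochInv q (N + n) * qPochInv q (N - n))) =
      fun N => partialTriple q u N * (qPoch q (2 * N))⁻¹ :=
    funext fun N => (hasSum_finite_triple hq hq0 hu a ha0 ha N).tsum_eq
  rw [hfun] at hlim
  have huniq := tendsto_nhds_unique hlim2 hlim
  rw [tsum_mul_right, ← hE] at huniq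
  generalize (∏' k : ℕ, (1 - u⁻¹ * q ^ (k + 1))) = P at huniq ⊢
  field_simp at huniq
  linear_combination huniq

/-! ### The exponential `e(z)` and the identity with characteristics -/

lemma ee_add (x y : ℂ) : ee (x + y) = ee x * ee y := by
  rw [ee, ee, ee, ← Complex.exp_add, mul_add]

lemma ee_neg (x : ℂ) : ee (-x) = (ee x)⁻¹ := by
  rw [ee, ee, ← Complex.exp_neg, mul_neg]

lemma ee_ne_zero (x : ℂ) : ee x ≠ 0 := Complex.exp_ne_zero _

lemma ee_int_mul (n : ℤ) (x : ℂ) : ee (n * x) = ee x ^ n := by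
  rw [ee, ee, ← Complex.exp_int_mul]
  congr 1; ring

lemma ee_nat_mul (n : ℕ) (x : ℂ) : ee (n * x) = ee x ^ n := by
  rw [ee, ee, ← Complex.exp_nat_mul]
  congr 1; ring

lemma ee_half : ee (1 / 2) = -1 := by
  rw [ee, ← Complex.exp_pi_mul_I]
  congr 1; ring

lemma ee_quarter : ee (1 / 4) = Complex.I := by
  rw [ee]
  convert Complex.exp_pi_div_two_mul_I using 2
  ring

lemma norm_ee_lt_one {τ : ℂ} (hτ : 0 < τ.im) : ‖ee τ‖ < 1 :=
  UpperHalfPlane.norm_exp_two_pi_I_lt_one ⟨τ, hτ⟩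

/-- The triple product in additive notation: `q = e(τ)`, `u = e(w)`. -/
lemma triple_product_ee (w τ : ℂ) (hτ : 0 < τ.im) :
    (∏' k : ℕ, (1 - ee w * ee τ ^ k)) * (∏' k : ℕ, (1 - (ee w)⁻¹ * ee τ ^ (k + 1))) *
      (∏' k : ℕ, (1 - ee τ ^ (k + 1))) =
    ∑' n : ℤ, ee ((n : ℂ) * (n - 1) / 2 * τ + n * (w + 1 / 2)) := by
  refine triple_product (norm_ee_lt_one hτ) (ee_ne_zero _) (ee_ne_zero _) _ ?_ ?_ ?_
  · simp [ee]
  · intro n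
    rw [← ee_int_mul, neg_eq_neg_one_mul, ← ee_half, ← ee_add, ← ee_add, ← ee_add]
    congr 1; push_cast; ring
  · refine ((summable_jacobiTheta₂_term_iff (w + 1 / 2 - τ / 2) τ).mpr hτ).congr fun n => ?_
    rw [jacobiTheta₂_term, ee]
    congr 1; ring

/-- The Jacobi triple product with characteristics. -/
theorem jacobi_triple_product_char (r : ℝ × ℝ) (z τ : ℂ) (hτ : 0 < τ.im) :
    varpiChar r z τ * varpiChar (-r.1, -r.2) (-z) τ * dedekindEta τ
      = Complex.I
        * ee (-((r.2 : ℂ)^2 / 2 + 1/12) * τ - (r.2 : ℂ) * (z - (r.1 : ℂ) + 1/2))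
        * (ee ((z + (r.2 : ℂ) * τ - (r.1 : ℂ)) / 2)
            - ee (-(z + (r.2 : ℂ) * τ - (r.1 : ℂ)) / 2))
        * thetaChar r z τ := by
  set w : ℂ := z + (r.2 : ℂ) * τ - (r.1 : ℂ) with hw
  have hq := norm_ee_lt_one hτ
  have v1 : varpiChar r z τ = ∏' k : ℕ, (1 - ee w * ee τ ^ k) := by
    refine tprod_congr fun k => ?_
    rw [← ee_nat_mul, ← ee_add]
    congr 2; rw [hw]; ring
  have v2 : varpiChar (-r.1, -r.2) (-z) τ =
      (1 - (ee w)⁻¹) * ∏' k : ℕ, (1 - (ee w)⁻¹ * ee τ ^ (k + 1)) := by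
    have h : varpiChar (-r.1, -r.2) (-z) τ = ∏' k : ℕ, (1 - (ee w)⁻¹ * ee τ ^ k) := by
      refine tprod_congr fun k => ?_
      rw [← ee_nat_mul, ← ee_neg, ← ee_add]
      congr 2; rw [hw]; push_cast; ring
    have hm : Multipliable fun k : ℕ => 1 - (ee w)⁻¹ * ee τ ^ (k + 1) := by
      have := multipliable_one_sub_mul_pow hq ((ee w)⁻¹ * ee τ)
      simpa only [pow_succ', mul_assoc] using this
    rw [h, tprod_eq_zero_mul' (f := fun k : ℕ => 1 - (ee w)⁻¹ * ee τ ^ k) hm]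
    simp
  have v3 : dedekindEta τ = ee (τ / 24) * ∏' k : ℕ, (1 - ee τ ^ (k + 1)) := by
    rw [dedekindEta]
    congr 1
    refine tprod_congr fun k => ?_
    rw [← ee_nat_mul]
    push_cast; rfl
  -- Shifting the summation index by one turns the exponent `(n + 1/2)² / 2` of the theta series
  -- into `n (n - 1) / 2`, up to a factor that does not depend on `n`.
  have v4 : thetaChar r z τ = ee (((r.2 : ℂ) ^ 2 / 2 + 1 / 8) * τ
      + (r.2 : ℂ) * (z - (r.1 : ℂ) + 1 / 2) - (w + 1 / 2) / 2) *
      ∑' n : ℤ, ee ((n : ℂ) * (n - 1) / 2 * τ + n * (w + 1 / 2)) := by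
    rw [← tsum_mul_left, thetaChar, ← (Equiv.subRight (1 : ℤ)).tsum_eq]
    refine tsum_congr fun n => ?_
    rw [← ee_add, Equiv.subRight_apply]
    congr 1; rw [hw]; push_cast; ring
  -- The half-integral phase `1/4` in the theta series cancels the factor `i`.
  have pre : Complex.I
        * ee (-((r.2 : ℂ)^2 / 2 + 1/12) * τ - (r.2 : ℂ) * (z - (r.1 : ℂ) + 1/2))
        * (ee (w / 2) - ee (-w / 2)) * ee (((r.2 : ℂ) ^ 2 / 2 + 1 / 8) * τ
      + (r.2 : ℂ) * (z - (r.1 : ℂ) + 1 / 2) - (w + 1 / 2) / 2) =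
      ee (τ / 24) * (1 - (ee w)⁻¹) := by
    have h0 : 1 - (ee w)⁻¹ = ee 0 - ee (-w) := by
      rw [ee_neg]
      simp [ee]
    rw [← ee_quarter, h0, mul_sub, sub_mul, mul_sub, ← ee_add, ← ee_add, ← ee_add,
      ← ee_add, ← ee_add, ← ee_add, ← ee_add]
    congr 2 <;> ring
  rw [v4, ← mul_assoc, pre, ← triple_product_ee w τ hτ, v1, v2, v3]
  ring
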